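/- arXiv:2602.04073 — 9 statements merged into one kernel-verified Lean document; each statement's English description precedes it below -/
import Mathlib

section
/- No weakly Stalnakerian selection frame satisfies DS: for every selection model M based on a weakly Stalnakerian selection frame, every world w, and every variable assignment g, M,w,g does not satisfy DS. -/
/-!
The argument works at a fixed world `w`. Write `P a` for the set of worlds where `F` holds of `a`,
and let `Q` be the union of the `P a` over `a ∈ d(w)`. By Uniqueness and Success, `f(Q,w)` is
contained in a single `P a`. Uniformity then gives `f(S,w) = f(Q,w)` for every `S` with
`P a ⊆ S ⊆ Q`, so in particular `f(P a ∪ P b,w) = f(P a,w)` for all `b ∈ d(w)`. The conjunct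
`∀x ◇F(x)` says that `f(P a,w)` is nonempty, and by Success it lies inside `P a`; hence no `b` can
make `(F(a) ∨ F(b)) > ¬F(a)` true at `w`.
-/


universe u

/-- Formulas of the language `L` of quantified conditional logic:
atomic formulas `P^n_p(x_1,…,x_n)` (with variables coded by naturals),
negation, material implication, the conditional `>`, and universal
quantification. -/
inductive Formula : Type where
  | atom : (n : ℕ) → ℕ → (Fin n → ℕ) → Formula
  | neg : Formula → Formula
  | imp : Formula → Formula → Formula
  | cond : Formula → Formula → Formula
  | all : ℕ → Formula → Formula

namespace Formula

/-- `⊤`, defined classically. -/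
def top : Formula := imp (atom 0 0 Fin.elim0) (atom 0 0 Fin.elim0)
/-- `⊥`, defined classically. -/
def bot : Formula := neg top
/-- Conjunction, defined classically. -/
def land (φ ψ : Formula) : Formula := neg (imp φ (neg ψ))
/-- Disjunction, defined classically. -/
def lor (φ ψ : Formula) : Formula := imp (neg φ) ψ
/-- Biconditional `≡`, defined classically. -/
def biimp (φ ψ : Formula) : Formula := land (imp φ ψ) (imp ψ φ)
/-- Existential quantification, defined classically. -/
def ex (x : ℕ) (φ : Formula) : Formula := neg (all x (neg φ))
/-- `◇φ := ¬(φ > ⊥)`. -/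
def dia (φ : Formula) : Formula := neg (cond φ bot)
/-- `□φ := ¬φ > ⊥`. -/
def box (φ : Formula) : Formula := cond (neg φ) bot

/-- The free variables of a formula. -/
def freeVars : Formula → Finset ℕ
  | atom _ _ a => Finset.image a Finset.univ
  | neg φ => freeVars φ
  | imp φ ψ => freeVars φ ∪ freeVars ψ
  | cond φ ψ => freeVars φ ∪ freeVars ψ
  | all x φ => freeVars φ \ {x}

/-- Capture-avoiding simultaneous substitution of variables (bound variables
are renamed as needed). -/
def substV (σ : ℕ → ℕ) : Formula → Formula
  | atom n p a => atom n p fun i => σ (a i)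
  | neg φ => neg (substV σ φ)
  | imp φ ψ => imp (substV σ φ) (substV σ ψ)
  | cond φ ψ => cond (substV σ φ) (substV σ ψ)
  | all x φ =>
      let img := ((freeVars φ).erase x).image σ
      let x' := if x ∈ img then img.sup id + 1 else x
      all x' (substV (Function.update σ x x') φ)

end Formula

/-- `subst1 x y φ` is `φ[y/x]`: the capture-avoiding substitution of the
variable `y` for all free occurrences of the variable `x` in `φ`. -/
def subst1 (x y : ℕ) (φ : Formula) : Formula :=
  Formula.substV (Function.update id x y) φ

/-- `φ` is a substitution instance of a propositional tautology: every
Boolean valuation of formulas commuting with `¬` and `⊃` makes `φ` true. -/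
def IsTautInstance (φ : Formula) : Prop :=
  ∀ v : Formula → Bool,
    (∀ ψ, v (Formula.neg ψ) = !(v ψ)) →
    (∀ ψ χ, v (Formula.imp ψ χ) = (!(v ψ) || v χ)) →
    v φ = true

/-- `conjs ψ l` is the conjunction `ψ ∧ ⋯` of `ψ` followed by the formulas
in `l`. -/
def conjs : Formula → List Formula → Formula
  | φ, [] => φ
  | φ, ψ :: l => Formula.land φ (conjs ψ l)

/-- The logic `QC2`: the smallest set of `L`-formulas containing all
substitution instances of propositional tautologies, (ID), (CSO), (Cen),
(CEM), (UI), and (C∀), and closed under modus ponens, the conditional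
consequence rule, and universal generalization. -/
inductive QC2 : Formula → Prop where
  | taut {φ} : IsTautInstance φ → QC2 φ
  | id (φ) : QC2 (Formula.cond φ φ)
  | cso (φ ψ χ) :
      QC2 (.imp (.land (.cond φ ψ) (.land (.cond ψ φ) (.cond φ χ))) (.cond ψ χ))
  | cen (φ ψ) : QC2 (.imp (.cond φ ψ) (.imp φ ψ))
  | cem (φ ψ) : QC2 (.lor (.cond φ ψ) (.cond φ (.neg ψ)))
  | ui (x y : ℕ) (φ) : QC2 (.imp (.all x φ) (subst1 x y φ))
  | callax (x : ℕ) (φ ψ) (h : x ∉ φ.freeVars) :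
      QC2 (.imp (.all x (.cond φ ψ)) (.cond φ (.all x ψ)))
  | mp {φ ψ} : QC2 (.imp φ ψ) → QC2 φ → QC2 ψ
  | crule {φ χ ψ : Formula} {l : List Formula} :
      QC2 (.imp (conjs ψ l) χ) →
      QC2 (.imp (conjs (.cond φ ψ) (l.map (.cond φ))) (.cond φ χ))
  | gen {ψ : Formula} {x y : ℕ} {φ : Formula} :
      y ∉ ψ.freeVars → y ∉ (Formula.all x φ).freeVars →
      QC2 (.imp ψ (subst1 x y φ)) → QC2 (.imp ψ (.all x φ))

/-- A selection frame `(W, R, f, D, d)`. -/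
structure SelFrame : Type (u + 1) where
  W : Type u
  Wne : Nonempty W
  R : W → W → Prop
  f : Set W → W → Set W
  D : Type u
  Dne : Nonempty D
  d : W → Set D
  f_sub : ∀ P w, f P w ⊆ {v | R w v}

/-- A selection model based on a selection frame: an interpretation assigning
to each `n`-place predicate and world a set of `n`-tuples from `D`. -/
structure SelModel (F : SelFrame.{u}) : Type u where
  I : (n : ℕ) → ℕ → F.W → Set (Fin n → F.D)

/-- Satisfaction `M,w,g ⊨ φ` in a selection model. -/
def Sat {F : SelFrame.{u}} (M : SelModel F) : Formula → F.W → (ℕ → F.D) → Prop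
  | .atom n p a, w, g => (fun i => g (a i)) ∈ M.I n p w
  | .neg φ, w, g => ¬ Sat M φ w g
  | .imp φ ψ, w, g => Sat M φ w g → Sat M ψ w g
  | .cond φ ψ, w, g => F.f {v | Sat M φ v g} w ⊆ {v | Sat M ψ v g}
  | .all x φ, w, g => ∀ a ∈ F.d w, Sat M φ w (Function.update g x a)

/-- A formula is valid in a selection frame if it holds at every world under
every assignment in every model based on that frame. -/
def FrameValid (F : SelFrame.{u}) (φ : Formula) : Prop :=
  ∀ (M : SelModel F) (w : F.W) (g : ℕ → F.D), Sat M φ w g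

namespace SelFrame

variable (F : SelFrame.{u})

/-- (Success) `f(P,w) ⊆ P`. -/
def Success : Prop := ∀ P w, F.f P w ⊆ P
/-- (Weak Centering) `w ∈ P` implies `w ∈ f(P,w)`. -/
def WeakCentering : Prop := ∀ P w, w ∈ P → w ∈ F.f P w
/-- (Uniformity) if `f(P,w) ⊆ Q` and `f(Q,w) ⊆ P` then `f(P,w) = f(Q,w)`. -/
def Uniformity : Prop := ∀ P Q w, F.f P w ⊆ Q → F.f Q w ⊆ P → F.f P w = F.f Q w
/-- (Uniqueness) `f(P,w)` has at most one element. -/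
def Uniqueness : Prop := ∀ P w, (F.f P w).Subsingleton
/-- (LA) if `f(P,w) = ∅` then `P ∩ R(w) = ∅`. -/
def LA : Prop := ∀ P w, F.f P w = ∅ → P ∩ {v | F.R w v} = ∅
/-- (WLA) if `f(P,w) = ∅` then `P ∩ f(Q,w) = ∅`. -/
def WLA : Prop := ∀ P Q w, F.f P w = ∅ → P ∩ F.f Q w = ∅
/-- (Rational Monotonicity) if `P ⊆ Q` and `f(Q,w) ∩ P ≠ ∅` then
`f(P,w) = f(Q,w) ∩ P`. -/
def RatMono : Prop := ∀ P Q w, P ⊆ Q → F.f Q w ∩ P ≠ ∅ → F.f P w = F.f Q w ∩ P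
/-- A selection frame is weakly Stalnakerian if it satisfies Success, Weak
Centering, Uniformity, and Uniqueness. -/
def WeaklyStalnakerian : Prop :=
  F.Success ∧ F.WeakCentering ∧ F.Uniformity ∧ F.Uniqueness
/-- A selection frame is Stalnakerian if it satisfies Success, Weak
Centering, LA, Uniformity, and Uniqueness. -/
def Stalnakerian : Prop :=
  F.Success ∧ F.WeakCentering ∧ F.LA ∧ F.Uniformity ∧ F.Uniqueness
/-- A selection frame is globally constant if `d(w) = D` for all `w`. -/
def GloballyConstant : Prop := ∀ w, F.d w = Set.univ

end SelFrame

/-- `F(x)`: the fixed 1-place predicate (index 0) applied to variable `x`. -/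
def Fp (x : ℕ) : Formula := .atom 1 0 fun _ => x

/-- The sentence `DS := ∃x⊤ ∧ ∀x ◇F(x) ∧ ∀x∃y((F(x) ∨ F(y)) > ¬F(x))`. -/
def DS : Formula :=
  .land (.ex 0 .top)
    (.land (.all 0 (.dia (Fp 0)))
      (.all 0 (.ex 1 (.cond (.lor (Fp 0) (Fp 1)) (.neg (Fp 0))))))

/-- The frame-theoretic core: no nonempty family of propositions, each with a nonempty selection,
is such that every member `P a` has a partner `P b` for which `f(P a ∪ P b,w)` avoids `P a`. -/
theorem SelFrame.WeaklyStalnakerian.no_descent {F : SelFrame.{u}} (hF : F.WeaklyStalnakerian)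
    (w : F.W) {A : Set F.D} (hA : A.Nonempty) (P : F.D → Set F.W)
    (hne : ∀ a ∈ A, (F.f (P a) w).Nonempty)
    (hdesc : ∀ a ∈ A, ∃ b ∈ A, F.f (P a ∪ P b) w ⊆ (P a)ᶜ) : False := by
  obtain ⟨hS, -, hU, hUq⟩ := hF
  let Q : Set F.W := ⋃ a ∈ A, P a
  have hPQ : ∀ a ∈ A, P a ⊆ Q := fun a ha => Set.subset_biUnion_of_mem (u := P) ha
  have hQ : ∃ a ∈ A, F.f Q w ⊆ P a := by
    rcases (F.f Q w).eq_empty_or_nonempty with h | ⟨q, hq⟩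
    · obtain ⟨a, ha⟩ := hA
      exact ⟨a, ha, by simp [h]⟩
    · obtain ⟨a, ha, hqa⟩ := Set.mem_iUnion₂.1 (hS Q w hq)
      exact ⟨a, ha, fun v hv => hUq Q w hq hv ▸ hqa⟩
  obtain ⟨a, ha, haQ⟩ := hQ
  have key : ∀ S, P a ⊆ S → S ⊆ Q → F.f S w = F.f Q w := fun S h₁ h₂ =>
    hU S Q w ((hS S w).trans h₂) (haQ.trans h₁)
  obtain ⟨b, hb, hab⟩ := hdesc a ha
  obtain ⟨x, hx⟩ := hne a ha
  rw [key _ Set.subset_union_left (Set.union_subset (hPQ a ha) (hPQ b hb)),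
    ← key _ subset_rfl (hPQ a ha)] at hab
  exact hab hx (hS _ w hx)

/-- No weakly Stalnakerian selection frame satisfies `DS`: for
every selection model `M` based on a weakly Stalnakerian selection frame,
every world `w`, and every variable assignment `g`, `M,w,g ⊭ DS`. -/
theorem no_weakly_stalnakerian_satisfies_DS (F : SelFrame.{u})
    (hF : F.WeaklyStalnakerian) (M : SelModel F) (w : F.W) (g : ℕ → F.D) :
    ¬ Sat M DS w g := by
  intro h
  simp only [DS, Formula.land, Formula.lor, Formula.ex, Formula.dia, Formula.bot, Formula.top, Fp,
    Sat, Classical.not_imp, not_not, imp_self, not_true_eq_false,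
    Function.update_self, ne_eq, zero_ne_one, not_false_eq_true, Function.update_of_ne,
    Set.ofPred_false, Set.subset_empty_iff] at h
  obtain ⟨hex, hdia, hdesc⟩ := h
  push Not at hex hdesc
  refine hF.no_descent w (A := F.d w) (by simpa [Set.Nonempty] using hex)
    (fun a => {v | (fun _ => a) ∈ M.I 1 0 v})
    (fun a ha => Set.nonempty_iff_ne_empty.2 (hdia a ha)) (fun a ha => ?_)
  obtain ⟨b, hb, hab⟩ := hdesc a ha
  refine ⟨b, hb, ?_⟩
  -- `∨` is encoded as `¬ · ⊃ ·`, so the antecedent must be rewritten as a union.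
  have hset : {v | (fun _ => a) ∈ M.I 1 0 v} ∪ {v | (fun _ => b) ∈ M.I 1 0 v} =
      {v | (fun _ => a) ∉ M.I 1 0 v → (fun _ => b) ∈ M.I 1 0 v} := by
    ext v
    exact or_iff_not_imp_left
  rw [hset]
  exact hab
end

section
/- No selection frame satisfying Success, WLA, and Rational Monotonicity satisfies DS: if a selection frame satisfies (Success) f(P,w) ⊆ P, (WLA) f(P,w) = ∅ implies P ∩ f(Q,w) = ∅, and (Rational Monotonicity) P ⊆ Q and f(Q,w) ∩ P ≠ ∅ imply f(P,w) = f(Q,w) ∩ P (for all P,Q ⊆ W, w ∈ W), then for every selection model based on that frame, every world w, and every variable assignment g, DS fails at w under g. -/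
/-!
Write `A a` for the set of worlds where `F` holds of `a`, and let `U` be the union of the `A a`
over `a ∈ d(w)`. If `DS` held at `w`, every `f(A a, w)` with `a ∈ d(w)` would be nonempty, so by
Success and WLA `f(U, w)` would contain some world `v`, which by Success lies in some `A a`.
The last conjunct of `DS` gives `b ∈ d(w)` such that `f(A a ∪ A b, w)` is disjoint from `A a`.
But `v ∈ f(U, w) ∩ (A a ∪ A b)`, which equals `f(A a ∪ A b, w)` by Rational Monotonicity:
a contradiction.
-/

universe u

/-- No selection frame satisfying Success, WLA, and Rational
Monotonicity satisfies `DS`: for every selection model based on such a frame,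
every world `w`, and every variable assignment `g`, `DS` fails at `w` under
`g`. -/
theorem no_success_wla_ratmono_satisfies_DS (F : SelFrame.{u})
    (hSuc : F.Success) (hWLA : F.WLA) (hRM : F.RatMono)
    (M : SelModel F) (w : F.W) (g : ℕ → F.D) :
    ¬ Sat M DS w g := by
  intro h
  simp only [DS, Fp, Formula.land, Formula.lor, Formula.ex, Formula.dia, Formula.bot,
    Formula.top, Sat, Classical.not_imp, not_not, not_forall, not_exists,
    not_and] at h
  obtain ⟨⟨a₀, ha₀, -⟩, hdia, hdom⟩ := h
  let A : F.D → Set F.W := fun a => {v | (fun _ : Fin 1 => a) ∈ M.I 1 0 v}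
  have hne : ∀ a ∈ F.d w, (F.f (A a) w).Nonempty := by
    intro a ha
    rw [Set.nonempty_iff_ne_empty]
    intro he
    apply hdia a ha
    intro v hv
    simp only [Function.update_self] at hv
    change v ∈ F.f (A a) w at hv
    simp [he] at hv
  have hstep : ∀ a ∈ F.d w, ∃ b ∈ F.d w, ∀ v ∈ F.f (A a ∪ A b) w, v ∉ A a := by
    intro a ha
    obtain ⟨b, hb, hsub⟩ := hdom a ha
    refine ⟨b, hb, fun v hv hva => ?_⟩
    have hset : A a ∪ A b = {v | ¬ (v ∈ A a) → v ∈ A b} := by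
      ext v
      exact or_iff_not_imp_left
    rw [hset] at hv
    simp [Function.update_of_ne] at hsub
    exact hsub hv hva
  let U : Set F.W := ⋃ a ∈ F.d w, A a
  have hAU : ∀ a ∈ F.d w, A a ⊆ U := fun a ha => Set.subset_biUnion_of_mem ha
  -- By WLA, a world selected for some `A a₀ ⊆ U` prevents `f(U, w)` from being empty.
  have hU : (F.f U w).Nonempty := by
    rw [Set.nonempty_iff_ne_empty]
    intro he
    obtain ⟨v, hv⟩ := hne a₀ ha₀
    have hmem : v ∈ U ∩ F.f (A a₀) w := ⟨hAU a₀ ha₀ (hSuc _ _ hv), hv⟩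
    simp [hWLA U (A a₀) w he] at hmem
  obtain ⟨v, hv⟩ := hU
  obtain ⟨a, ha, hva⟩ : ∃ a ∈ F.d w, v ∈ A a := by simpa [U] using hSuc _ _ hv
  obtain ⟨b, hb, hab⟩ := hstep a ha
  -- Rational Monotonicity carries `v` from `f(U, w)` down to `f(A a ∪ A b, w)`.
  have hmem : v ∈ F.f U w ∩ (A a ∪ A b) := ⟨hv, Or.inl hva⟩
  have heq := hRM (A a ∪ A b) U w (Set.union_subset (hAU a ha) (hAU b hb))
    (Set.nonempty_iff_ne_empty.mp ⟨v, hmem⟩)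
  exact hab v (heq ▸ hmem) hva
end

section
/- Frame correspondence for QC2: for every selection frame F, every theorem of QC2 is valid in F if and only if F is weakly Stalnakerian and globally constant. -/
/-!
The proof separates soundness from the frame conditions forced by the axioms.

For soundness, each axiom and rule of `QC2` is checked on a weakly Stalnakerian, globally constant
frame. The quantifier principles rest on two semantic facts: satisfaction depends only on the
values of the free variables (`sat_congr`), and the substitution lemma `sat_substV`, by which
substituting in the formula amounts to precomposing the assignment. Global constancy is needed for
(UI), whose instantiating variable may denote any element of `D`. For (C∀), if `x` is not free
in `φ` then the set expressed by `φ` does not change with the value of `x`.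

Conversely, 0-place predicates express arbitrary sets of worlds, so validity of (ID), (Cen), (CSO)
and (CEM) gives the conditions on `f`: for Weak Centering take the consequent `f(P,w)`, for
Uniformity take the third formula to be `f(P,w)`, and for Uniqueness take the consequent to be a
singleton contained in `f(P,w)`. Interpreting a 1-place predicate at each world as the domain of
that world, (UI) forces `d w = D`.
-/

universe u

/-! ### Free variables and substitution -/

section Semantics

variable {F : SelFrame.{u}} (M : SelModel F)

theorem sat_congr (φ : Formula) : ∀ (w : F.W) (g h : ℕ → F.D),
    (∀ x ∈ φ.freeVars, g x = h x) → (Sat M φ w g ↔ Sat M φ w h) := by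
  induction φ with
  | atom n p a =>
    intro w g h H
    have : (fun i => g (a i)) = fun i => h (a i) := by
      funext i
      exact H _ (Finset.mem_image_of_mem _ (Finset.mem_univ _))
    simp only [Sat, this]
  | neg φ ih =>
    intro w g h H
    exact not_congr (ih w g h H)
  | imp φ ψ ih₁ ih₂ =>
    intro w g h H
    exact imp_congr (ih₁ w g h fun x hx => H x (Finset.mem_union_left _ hx))
      (ih₂ w g h fun x hx => H x (Finset.mem_union_right _ hx))
  | cond φ ψ ih₁ ih₂ =>
    intro w g h H
    have e₁ : {v | Sat M φ v g} = {v | Sat M φ v h} :=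
      Set.ext fun v => ih₁ v g h fun x hx => H x (Finset.mem_union_left _ hx)
    have e₂ : {v | Sat M ψ v g} = {v | Sat M ψ v h} :=
      Set.ext fun v => ih₂ v g h fun x hx => H x (Finset.mem_union_right _ hx)
    simp only [Sat, e₁, e₂]
  | all x φ ih =>
    intro w g h H
    refine forall₂_congr fun a _ => ih w _ _ fun z hz => ?_
    by_cases hzx : z = x
    · subst hzx
      simp
    · simp only [Function.update_of_ne hzx]
      exact H z (by simp [Formula.freeVars, hz, hzx])

/-- The substitution lemma: substituting along `σ` has the same effect as precomposing the
assignment with `σ`. -/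
theorem sat_substV (φ : Formula) : ∀ (σ : ℕ → ℕ) (w : F.W) (g : ℕ → F.D),
    Sat M (φ.substV σ) w g ↔ Sat M φ w (g ∘ σ) := by
  induction φ with
  | atom n p a => exact fun σ w g => Iff.rfl
  | neg φ ih => exact fun σ w g => not_congr (ih σ w g)
  | imp φ ψ ih₁ ih₂ => exact fun σ w g => imp_congr (ih₁ σ w g) (ih₂ σ w g)
  | cond φ ψ ih₁ ih₂ =>
    intro σ w g
    simp only [Formula.substV, Sat, ih₁, ih₂]
  | all x φ ih =>
    intro σ w g
    simp only [Formula.substV]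
    set img := ((Formula.freeVars φ).erase x).image σ with himg
    set x' := if x ∈ img then img.sup id + 1 else x with hxdef
    -- The renamed bound variable captures nothing: it avoids the substituted free variables.
    have hfresh : x' ∉ img := by
      rw [hxdef]
      split_ifs with hx
      · intro hmem
        have hle : img.sup id + 1 ≤ img.sup id := Finset.le_sup (f := id) hmem
        omega
      · exact hx
    refine forall₂_congr fun a _ => ?_
    rw [ih]
    refine sat_congr M φ w _ _ fun z hz => ?_
    by_cases hzx : z = x
    · subst hzx
      simp
    · have hne : σ z ≠ x' := fun he =>
        hfresh (he ▸ Finset.mem_image_of_mem σ (Finset.mem_erase.2 ⟨hzx, hz⟩))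
      simp [Function.update_of_ne hzx, Function.update_of_ne hne]

theorem sat_subst1 (x y : ℕ) (φ : Formula) (w : F.W) (g : ℕ → F.D) :
    Sat M (subst1 x y φ) w g ↔ Sat M φ w (Function.update g x (g y)) := by
  rw [subst1, sat_substV, Function.comp_update, Function.comp_id]

/-! ### Soundness -/

theorem sat_land (φ ψ : Formula) (w : F.W) (g : ℕ → F.D) :
    Sat M (.land φ ψ) w g ↔ Sat M φ w g ∧ Sat M ψ w g := by
  simp only [Formula.land, Sat]
  tauto

theorem sat_lor (φ ψ : Formula) (w : F.W) (g : ℕ → F.D) :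
    Sat M (.lor φ ψ) w g ↔ Sat M φ w g ∨ Sat M ψ w g := by
  simp only [Formula.lor, Sat]
  tauto

theorem sat_conjs (l : List Formula) : ∀ (ψ : Formula) (w : F.W) (g : ℕ → F.D),
    Sat M (conjs ψ l) w g ↔ Sat M ψ w g ∧ ∀ χ ∈ l, Sat M χ w g := by
  induction l with
  | nil => simp [conjs]
  | cons χ l ih => intro ψ w g; simp [conjs, sat_land, ih]

theorem sat_of_isTautInstance {φ : Formula} (h : IsTautInstance φ) (w : F.W) (g : ℕ → F.D) :
    Sat M φ w g := by
  classical
  have := h (fun ψ => decide (Sat M ψ w g)) (fun ψ => by by_cases hs : Sat M ψ w g <;> simp [Sat, hs])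
    (fun ψ χ => by simp [Sat, imp_iff_not_or])
  simpa using this

end Semantics

theorem QC2.sound {F : SelFrame.{u}} (hF : F.WeaklyStalnakerian) (hd : F.GloballyConstant)
    {φ : Formula} (h : QC2 φ) : FrameValid F φ := by
  obtain ⟨hS, hC, hU, h1⟩ := hF
  induction h with
  | taut h => exact fun M => sat_of_isTautInstance M h
  | id φ => exact fun M w g => hS _ _
  | cso φ ψ χ =>
    intro M w g h
    simp only [sat_land, Sat] at h
    obtain ⟨h₁, h₂, h₃⟩ := h
    exact (hU _ _ _ h₁ h₂).symm.subset.trans h₃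
  | cen φ ψ => exact fun M w g h hφ => h (hC _ _ hφ)
  | cem φ ψ =>
    intro M w g
    rw [sat_lor]
    by_contra hcon
    rw [not_or] at hcon
    obtain ⟨a, ha, ha'⟩ := Set.not_subset.1 hcon.1
    obtain ⟨b, hb, hb'⟩ := Set.not_subset.1 hcon.2
    exact hb' (h1 _ _ ha hb ▸ ha')
  | ui x y φ =>
    intro M w g h
    exact (sat_subst1 M x y φ w g).2 (h _ (hd w ▸ Set.mem_univ _))
  | callax x φ ψ hx =>
    intro M w g h v hv a _
    have e : {u | Sat M φ u g} = {u | Sat M φ u (Function.update g x a)} :=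
      Set.ext fun u => sat_congr M φ u _ _ fun z hz => by
        rw [Function.update_of_ne (by rintro rfl; exact hx hz)]
    exact h a (hd w ▸ Set.mem_univ _) (e ▸ hv)
  | mp _ _ ih₁ ih₂ => exact fun M w g => ih₁ M w g (ih₂ M w g)
  | crule _ ih =>
    intro M w g h v hv
    rw [sat_conjs] at h
    refine ih M v g ((sat_conjs M _ _ v g).2 ⟨h.1 hv, fun χ hχ => ?_⟩)
    exact h.2 _ (List.mem_map_of_mem hχ) hv
  | @gen ψ x y φ hy hy' _ ih =>
    intro M w g hψ a _
    have hψ' : Sat M ψ w (Function.update g y a) :=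
      (sat_congr M ψ w _ _ fun z hz => by
        rw [Function.update_of_ne (by rintro rfl; exact hy hz)]).2 hψ
    have := (sat_subst1 M x y φ w _).1 (ih M w _ hψ')
    refine (sat_congr M φ w _ _ fun z hz => ?_).1 this
    by_cases hzx : z = x
    · subst hzx
      simp
    · have hzy : z ≠ y := fun e => hy' (e ▸ by simp [Formula.freeVars, hz, hzx])
      simp [hzx, hzy]

/-! ### Frame conditions from validity -/

/-- The model in which every predicate of index `p` holds, of all tuples, exactly at the worlds
of `S p`. Its 0-place atoms express the sets `S p`. -/
def propModel (F : SelFrame.{u}) (S : ℕ → Set F.W) : SelModel F where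
  I _ p w := {_t | w ∈ S p}

/-- The 0-place atom of index `p`. -/
def propAtom (p : ℕ) : Formula := .atom 0 p Fin.elim0

theorem sat_propAtom {F : SelFrame.{u}} (S : ℕ → Set F.W) (p : ℕ) (w : F.W) (g : ℕ → F.D) :
    Sat (propModel F S) (propAtom p) w g ↔ w ∈ S p := Iff.rfl

theorem weaklyStalnakerian_of_valid {F : SelFrame.{u}}
    (h : ∀ φ : Formula, QC2 φ → FrameValid F φ) : F.WeaklyStalnakerian := by
  have g : ℕ → F.D := fun _ => F.Dne.some
  have uni : ∀ P Q w, F.f P w ⊆ Q → F.f Q w ⊆ P → F.f Q w ⊆ F.f P w := by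
    intro P Q w hPQ hQP
    -- `p₀`, `p₁`, `p₂` express `P`, `Q`, `f(P,w)`.
    have := h _ (.cso (propAtom 0) (propAtom 1) (propAtom 2))
      (propModel F fun | 0 => P | 1 => Q | _ => F.f P w) w g
    exact this (by simpa only [sat_land] using ⟨hPQ, hQP, subset_rfl⟩)
  refine ⟨fun P w => ?_, fun P w hw => ?_, fun P Q w hPQ hQP => ?_, fun P w a ha b hb => ?_⟩
  · exact h _ (.id (propAtom 0)) (propModel F fun _ => P) w g
  · exact h _ (.cen (propAtom 0) (propAtom 1))
      (propModel F fun | 0 => P | _ => F.f P w) w g subset_rfl hw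
  · exact (uni Q P w hQP hPQ).antisymm (uni P Q w hPQ hQP)
  · have := h _ (.cem (propAtom 0) (propAtom 1))
      (propModel F fun | 0 => P | _ => {a}) w g
    rcases (sat_lor _ _ _ _ _).1 this with h' | h'
    · exact (h' hb : b = a).symm
    · exact absurd rfl (h' ha : ¬ a = a)

theorem globallyConstant_of_valid {F : SelFrame.{u}}
    (h : ∀ φ : Formula, QC2 φ → FrameValid F φ) : F.GloballyConstant := by
  refine fun w => Set.eq_univ_of_forall fun a => ?_
  have := h _ (.ui 0 1 (Fp 0)) ⟨fun _ _ v => {t | ∀ i, t i ∈ F.d v}⟩ w (fun _ => a)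
    (fun b hb _ => by simpa using hb)
  simpa using (sat_subst1 _ 0 1 (Fp 0) w _).1 this 0

/-- Frame correspondence for `QC2`: for every selection frame
`F`, every theorem of `QC2` is valid in `F` if and only if `F` is weakly
Stalnakerian and globally constant. -/
theorem QC2_frame_correspondence (F : SelFrame.{u}) :
    (∀ φ : Formula, QC2 φ → FrameValid F φ) ↔
      (F.WeaklyStalnakerian ∧ F.GloballyConstant) := by
  exact ⟨fun h => ⟨weaklyStalnakerian_of_valid h, globallyConstant_of_valid h⟩,
    fun ⟨hF, hd⟩ _ hφ => hφ.sound hF hd⟩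
end

section
/- In the ordering model K, the sentence DS holds at the world −∞ under every variable assignment. -/
/-!
Write `F(n)` for the proposition expressed by `F(x)` when `x` denotes `n`; in `K` it is the up-set
`{k ∈ ℤ⁻ : n ≤ k}`, which omits `−∞`. The domain is nonempty, so `∃x⊤` holds.
Each `F(n)` contains `n` and `⪯_{−∞}` is reflexive, so no witness for `F(n) > ⊥` exists, and
`◇F(x)` holds. For the last conjunct, given `n` let `y` denote `n - 1`: the least world of
`F(n) ∪ F(n - 1)` is `n - 1`, which lies outside `F(n)`.
-/

universe u

/-- An ordering frame `(W, R, ⪯, D, d)`: `pre w x y` means `x ⪯_w y`, and each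
`⪯_w` is a relation on `R(w)`. -/
structure OrdFrame : Type (u + 1) where
  W : Type u
  Wne : Nonempty W
  R : W → W → Prop
  pre : W → W → W → Prop
  pre_sub : ∀ w x y, pre w x y → R w x ∧ R w y
  D : Type u
  Dne : Nonempty D
  d : W → Set D

/-- An ordering model based on an ordering frame. -/
structure OrdModel (F : OrdFrame.{u}) : Type u where
  I : (n : ℕ) → ℕ → F.W → Set (Fin n → F.D)

/-- Satisfaction `M,w,g ⊨ φ` in an ordering model.  The conditional clause:
`M,w,g ⊨ φ > ψ` iff `[φ]^g ∩ R(w) = ∅` or there is `x ∈ [φ]^g ∩ R(w)` such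
that every `y ∈ [φ]^g` with `y ⪯_w x` lies in `[ψ]^g`. -/
def OSat {F : OrdFrame.{u}} (M : OrdModel F) : Formula → F.W → (ℕ → F.D) → Prop
  | .atom n p a, w, g => (fun i => g (a i)) ∈ M.I n p w
  | .neg φ, w, g => ¬ OSat M φ w g
  | .imp φ ψ, w, g => OSat M φ w g → OSat M ψ w g
  | .cond φ ψ, w, g =>
      {v | OSat M φ v g} ∩ {v | F.R w v} = ∅ ∨
        ∃ x ∈ {v | OSat M φ v g} ∩ {v | F.R w v},
          ∀ y, OSat M φ y g → F.pre w y x → OSat M ψ y g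
  | .all x φ, w, g => ∀ a ∈ F.d w, OSat M φ w (Function.update g x a)

/-- The negative integers. -/
abbrev NegInt : Type := {k : ℤ // k < 0}

/-- The worlds of the ordering model `K`: the negative integers together with
an extra point `−∞` (represented by `none`). -/
abbrev KW : Type := Option NegInt

/-- Accessibility in `K`: `R(−∞) = W` and `R(k) = {k}` for `k ∈ ℤ⁻`. -/
def KR : KW → KW → Prop
  | none, _ => True
  | some k, v => v = some k

/-- The order of `K` with `−∞` below every negative integer. -/
def KWle : KW → KW → Prop
  | none, _ => True
  | some _, none => False
  | some j, some k => j.1 ≤ k.1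

/-- The orderings of `K`: `x ⪯_{−∞} y` iff `x ≤ y`, and `⪯_k = {(k,k)}`. -/
def Kpre : KW → KW → KW → Prop
  | none, x, y => KWle x y
  | some k, x, y => x = some k ∧ y = some k

/-- The ordering frame underlying the model `K`. -/
def Kframe : OrdFrame.{0} where
  W := KW
  Wne := ⟨none⟩
  R := KR
  pre := Kpre
  pre_sub := by
    intro w x y h
    cases w with
    | none => exact ⟨trivial, trivial⟩
    | some k => exact ⟨h.1, h.2⟩
  D := NegInt
  Dne := ⟨⟨-1, by norm_num⟩⟩
  d := fun _ => Set.univ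

/-- The interpretation of `K`: `I(F,k) = {n ∈ ℤ⁻ : n ≤ k}` for `k ∈ ℤ⁻`,
`I(F,−∞) = ∅`, and `I(G,w) = ∅` for every other predicate `G` (where `F` is
the 1-place predicate with index 0). -/
def KI : (n : ℕ) → ℕ → KW → Set (Fin n → NegInt)
  | 1, 0, some k => {a | (a 0).1 ≤ k.1}
  | _, _, _ => ∅

/-- The ordering model `K`. -/
def Kmodel : OrdModel Kframe := ⟨KI⟩

theorem OSat_land {F : OrdFrame.{u}} (M : OrdModel F) (φ ψ : Formula) (w : F.W) (g : ℕ → F.D) :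
    OSat M (.land φ ψ) w g ↔ OSat M φ w g ∧ OSat M ψ w g := by
  simp only [Formula.land, OSat]
  tauto

theorem OSat_lor {F : OrdFrame.{u}} (M : OrdModel F) (φ ψ : Formula) (w : F.W) (g : ℕ → F.D) :
    OSat M (.lor φ ψ) w g ↔ OSat M φ w g ∨ OSat M ψ w g := by
  simp only [Formula.lor, OSat]
  tauto

theorem OSat_ex {F : OrdFrame.{u}} (M : OrdModel F) (x : ℕ) (φ : Formula) (w : F.W)
    (g : ℕ → F.D) :
    OSat M (.ex x φ) w g ↔ ∃ a ∈ F.d w, OSat M φ w (Function.update g x a) := by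
  simp only [Formula.ex, OSat]
  push Not
  rfl

theorem OSat_top {F : OrdFrame.{u}} (M : OrdModel F) (w : F.W) (g : ℕ → F.D) :
    OSat M .top w g := by
  simp [Formula.top, OSat]

theorem OSat_Fp_some (x : ℕ) (k : NegInt) (g : ℕ → NegInt) :
    OSat Kmodel (Fp x) (some k) g ↔ (g x).1 ≤ k.1 :=
  Iff.rfl

theorem not_OSat_Fp_none (x : ℕ) (g : ℕ → NegInt) : ¬ OSat Kmodel (Fp x) none g :=
  fun h => h

theorem OSat_dia_Fp (x : ℕ) (g : ℕ → NegInt) : OSat Kmodel (.dia (Fp x)) none g := by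
  rintro (h | ⟨w, ⟨hw, -⟩, h⟩)
  · have hmem : (some (g x) : KW) ∈
        {v : KW | OSat Kmodel (Fp x) v g} ∩ {v : KW | KR none v} :=
      ⟨(OSat_Fp_some x (g x) g).2 le_rfl, trivial⟩
    exact (h ▸ hmem : (some (g x) : KW) ∈ (∅ : Set KW))
  · have hrefl : KWle w w := by
      cases w with
      | none => trivial
      | some k => exact le_refl k.1
    exact h w hw hrefl (OSat_top _ _ _)

/-- If `y` denotes the predecessor of what `x` denotes, that predecessor is the least world where
`F(x) ∨ F(y)` holds, and `F(x)` fails there. -/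
theorem OSat_cond_of_pred (x y : ℕ) (g : ℕ → NegInt) (hg : (g y).1 = (g x).1 - 1) :
    OSat Kmodel (.cond (.lor (Fp x) (Fp y)) (.neg (Fp x))) none g := by
  refine Or.inr ⟨some (g y), ⟨(OSat_lor _ _ _ _ _).2 (Or.inr ?_), trivial⟩, ?_⟩
  · exact (OSat_Fp_some y (g y) g).2 le_rfl
  · intro w _ hle
    cases w with
    | none => exact not_OSat_Fp_none x g
    | some k =>
      intro hF
      have h1 : k.1 ≤ (g y).1 := hle
      have h2 : (g x).1 ≤ k.1 := hF
      omega

/-- In the ordering model `K`, the sentence `DS` holds at the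
world `−∞` under every variable assignment. -/
theorem K_satisfies_DS_at_minus_infinity (g : ℕ → NegInt) :
    OSat Kmodel DS none g := by
  refine (OSat_land _ _ _ _ _).2 ⟨?_, (OSat_land _ _ _ _ _).2 ⟨?_, ?_⟩⟩
  · exact (OSat_ex _ _ _ _ _).2 ⟨g 0, trivial, OSat_top _ _ _⟩
  · exact fun a _ => OSat_dia_Fp 0 _
  · intro a _
    refine (OSat_ex _ _ _ _ _).2 ⟨(⟨a.1 - 1, by have := a.2; omega⟩ : NegInt), trivial, ?_⟩
    exact OSat_cond_of_pred 0 1 _ rfl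
end

section
/- In the ordering model K: for every L-formula φ and variable assignment g, if φ⁻ denotes the result of replacing every occurrence of the conditional > in φ by the material implication ⊃, then [φ]^g ∩ Z⁻ = [φ⁻]^g ∩ Z⁻. -/
/-!
Each world `k ∈ ℤ⁻` of `K` accesses only itself, so `>` and `⊃` agree at `k` (`OSat_cond_some`).
All other connectives, and the quantifier, are evaluated at `k` alone. The
claim therefore follows by induction on `φ`, for all assignments at once
(`OSat_some_iff_minus`).
-/

universe u

namespace Formula

/-- `φ⁻`: the result of replacing every occurrence of the conditional `>` in
`φ` by the material implication `⊃`. -/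
def minus : Formula → Formula
  | atom n p a => atom n p a
  | neg φ => neg φ.minus
  | imp φ ψ => imp φ.minus ψ.minus
  | cond φ ψ => imp φ.minus ψ.minus
  | all x φ => all x φ.minus

end Formula

/-- A world `k ∈ ℤ⁻` sees only itself, so there a conditional has the truth value of the
corresponding material implication, whatever happens at `−∞`. -/
lemma OSat_cond_some (φ ψ : Formula) (k : NegInt) (g : ℕ → NegInt) :
    OSat Kmodel (.cond φ ψ) (some k : KW) g ↔ OSat Kmodel (.imp φ ψ) (some k : KW) g := by
  constructor
  · rintro (h | ⟨x, ⟨_, hR⟩, h⟩) hφ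
    · have hk : (some k : KW) ∈ {v : KW | OSat Kmodel φ v g} ∩ {v : KW | KR (some k) v} :=
        ⟨hφ, rfl⟩
      exact absurd hk (Set.eq_empty_iff_forall_notMem.1 h _)
    · exact h (some k : KW) hφ ⟨rfl, hR⟩
  · intro h
    by_cases hφ : OSat Kmodel φ (some k : KW) g
    · refine Or.inr ⟨(some k : KW), ⟨hφ, rfl⟩, ?_⟩
      rintro y - ⟨rfl, -⟩
      exact h hφ
    · refine Or.inl (Set.eq_empty_iff_forall_notMem.2 ?_)
      rintro v ⟨hv, rfl⟩
      exact hφ hv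

lemma OSat_some_iff_minus (φ : Formula) (k : NegInt) (g : ℕ → NegInt) :
    OSat Kmodel φ (some k : KW) g ↔ OSat Kmodel φ.minus (some k : KW) g := by
  induction φ generalizing g with
  | atom n p a => rfl
  | neg φ ih => exact not_congr (ih g)
  | imp φ ψ ihφ ihψ => exact imp_congr (ihφ g) (ihψ g)
  | cond φ ψ ihφ ihψ =>
    exact (OSat_cond_some φ ψ k g).trans (imp_congr (ihφ g) (ihψ g))
  | all x φ ih => exact forall₂_congr fun a _ => ih (Function.update g x a)

/-- In the ordering model `K`, for every `L`-formula `φ` and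
variable assignment `g`, `[φ]^g ∩ ℤ⁻ = [φ⁻]^g ∩ ℤ⁻`. -/
theorem K_cond_free_on_negints (φ : Formula) (g : ℕ → NegInt) :
    {w : KW | OSat Kmodel φ w g} ∩ Set.range Option.some =
      {w : KW | OSat Kmodel φ.minus w g} ∩ Set.range Option.some := by
  ext w
  refine and_congr_left ?_
  rintro ⟨k, rfl⟩
  exact OSat_some_iff_minus φ k g
end

section
/- In the ordering model K: for every L-formula φ and variable assignment g, if φ is false at the world −∞ under g, then there exists an L-formula φ* containing no occurrence of the conditional > such that [φ]^g = [φ*]^g. -/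
/-!
A world `k ≠ −∞` of `K` sees only itself, so there `φ > ψ` is equivalent to the material `φ ⊃ ψ`.
Replacing every `>` by `⊃` therefore preserves truth at all such worlds (`K_sat_material_iff`); it
may change truth only at `−∞`. The sentence `∃x F(x)` is true at every `k` (take `x = k`) and false
at `−∞`, where `F` is empty. Hence if `φ` is false at `−∞`, the conjunction of `∃x F(x)` with the
material translation of `φ` holds at the same worlds as `φ`.
-/


universe u

namespace Formula

/-- A formula contains no occurrence of the conditional `>`. -/
def CondFree : Formula → Prop
  | atom _ _ _ => True
  | neg φ => φ.CondFree
  | imp φ ψ => φ.CondFree ∧ ψ.CondFree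
  | cond _ _ => False
  | all _ φ => φ.CondFree

end Formula

/-- The material translation: every conditional `>` is replaced by `⊃`. -/
def Formula.material : Formula → Formula
  | .atom n p a => .atom n p a
  | .neg φ => .neg φ.material
  | .imp φ ψ => .imp φ.material ψ.material
  | .cond φ ψ => .imp φ.material ψ.material
  | .all x φ => .all x φ.material

theorem Formula.material_condFree (φ : Formula) : φ.material.CondFree := by
  induction φ with
  | atom n p a => trivial
  | neg φ ih => exact ih
  | imp φ ψ ih₁ ih₂ => exact ⟨ih₁, ih₂⟩
  | cond φ ψ ih₁ ih₂ => exact ⟨ih₁, ih₂⟩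
  | all x φ ih => exact ih

theorem K_cond_some_iff (φ ψ : Formula) (k : NegInt) (g : ℕ → NegInt) :
    OSat Kmodel (.cond φ ψ) (some k) g ↔
      (OSat Kmodel φ (some k) g → OSat Kmodel ψ (some k) g) := by
  constructor
  · rintro (h | ⟨x, ⟨-, hx⟩, h⟩) hφ
    · have hk : (some k : KW) ∈ {v : KW | OSat Kmodel φ v g} ∩ {v : KW | KR (some k) v} :=
        ⟨hφ, rfl⟩
      exact absurd (h ▸ hk) (Set.notMem_empty _)
    · exact h (some k) hφ ⟨rfl, hx⟩
  · intro h
    by_cases hφ : OSat Kmodel φ (some k) g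
    · refine Or.inr ⟨some k, ⟨hφ, rfl⟩, ?_⟩
      rintro y - ⟨rfl, -⟩
      exact h hφ
    · refine Or.inl (Set.eq_empty_iff_forall_notMem.2 ?_)
      rintro v ⟨hv, hvk⟩
      have hvk' : v = some k := hvk
      subst hvk'
      exact hφ hv

theorem K_sat_material_iff (φ : Formula) (k : NegInt) (g : ℕ → NegInt) :
    OSat Kmodel φ.material (some k) g ↔ OSat Kmodel φ (some k) g := by
  induction φ generalizing g with
  | atom n p a => exact Iff.rfl
  | neg φ ih => exact not_congr (ih g)
  | imp φ ψ ih₁ ih₂ => exact imp_congr (ih₁ g) (ih₂ g)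
  | cond φ ψ ih₁ ih₂ =>
    exact (imp_congr (ih₁ g) (ih₂ g)).trans (K_cond_some_iff φ ψ k g).symm
  | all x φ ih => exact forall_congr' fun a => imp_congr Iff.rfl (ih (Function.update g x a))

theorem K_sat_land (φ ψ : Formula) (w : KW) (g : ℕ → NegInt) :
    OSat Kmodel (.land φ ψ) w g ↔ OSat Kmodel φ w g ∧ OSat Kmodel ψ w g := by
  change ¬ (OSat Kmodel φ w g → ¬ OSat Kmodel ψ w g) ↔ _
  tauto

theorem K_ex_F_some (k : NegInt) (g : ℕ → NegInt) :
    OSat Kmodel (.ex 0 (Fp 0)) (some k) g := by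
  intro h
  refine h k trivial ?_
  change (Function.update g 0 k 0).1 ≤ k.1
  simp

theorem K_not_ex_F_none (g : ℕ → NegInt) : ¬ OSat Kmodel (.ex 0 (Fp 0)) none g :=
  fun h => h fun _ _ hF => hF

/-- In the ordering model `K`, for every `L`-formula `φ` and
variable assignment `g`, if `φ` is false at the world `−∞` under `g`, then
there exists an `L`-formula `φ*` containing no occurrence of the conditional
`>` such that `[φ]^g = [φ*]^g`. -/
theorem K_false_at_minf_cond_free_equivalent (φ : Formula) (g : ℕ → NegInt)
    (h : ¬ OSat Kmodel φ none g) :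
    ∃ φstar : Formula, φstar.CondFree ∧
      {w : KW | OSat Kmodel φ w g} = {w : KW | OSat Kmodel φstar w g} := by
  refine ⟨.land (.ex 0 (Fp 0)) φ.material, ⟨trivial, φ.material_condFree⟩, ?_⟩
  ext w
  refine Iff.trans ?_ (K_sat_land _ _ w g).symm
  cases w with
  | none => exact iff_of_false h fun hw => K_not_ex_F_none g hw.1
  | some k =>
    exact ⟨fun hφ => ⟨K_ex_F_some k g, (K_sat_material_iff φ k g).2 hφ⟩,
      fun hw => (K_sat_material_iff φ k g).1 hw.2⟩
end

section
/- The MOD schema is a theorem schema of QC2: for all L-formulas φ and ψ, the formula (¬φ > ⊥) ⊃ (ψ > φ) belongs to QC2. -/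
/-!
Assume `¬φ > ⊥`. By the conditional consequence rule, `¬φ > χ` holds for every `χ`, in particular
`¬φ > ψ` and `¬φ > φ`. By (CEM), either `ψ > φ`, as desired, or `ψ > ¬φ`. In the latter case
`¬φ` and `ψ` conditionally imply each other, so (CSO) transfers `¬φ > φ` to `ψ > φ`.
-/

universe u

/-- From `φ > ⊥` the conditional consequence rule yields `φ > χ` for every `χ`. -/
theorem QC2.cond_of_cond_bot (φ χ : Formula) :
    QC2 (.imp (.cond φ .bot) (.cond φ χ)) := by
  refine QC2.crule (l := []) (QC2.taut ?_)
  intro v hn hi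
  simp [conjs, Formula.bot, Formula.top, hn, hi]

/-- The propositional step of the argument: `a ⊃ d`, `a ⊃ e`, `b ∨ c` and `(d ∧ c ∧ e) ⊃ b`
together give `a ⊃ b`. -/
theorem QC2.imp_of_cases {a b c d e : Formula} (had : QC2 (.imp a d)) (hae : QC2 (.imp a e))
    (hbc : QC2 (.lor b c)) (hb : QC2 (.imp (.land d (.land c e)) b)) : QC2 (.imp a b) := by
  have ht : QC2 (.imp (.imp a d) (.imp (.imp a e) (.imp (.lor b c)
      (.imp (.imp (.land d (.land c e)) b) (.imp a b))))) := by
    refine QC2.taut fun v hn hi => ?_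
    simp only [Formula.lor, Formula.land, hn, hi]
    cases v a <;> cases v b <;> cases v c <;> cases v d <;> cases v e <;> rfl
  exact .mp (.mp (.mp (.mp ht had) hae) hbc) hb

/-- The MOD schema is a theorem schema of `QC2`: for all
`L`-formulas `φ` and `ψ`, the formula `(¬φ > ⊥) ⊃ (ψ > φ)` belongs to
`QC2`. -/
theorem MOD_theorem_of_QC2 (φ ψ : Formula) :
    QC2 (.imp (.cond (.neg φ) .bot) (.cond ψ φ)) := by
  exact QC2.imp_of_cases (QC2.cond_of_cond_bot _ ψ) (QC2.cond_of_cond_bot _ φ)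
    (QC2.cem ψ φ) (QC2.cso (.neg φ) ψ φ)
end

section
/- Frame correspondence for MOD: a selection frame F validates every instance of the MOD schema (¬φ > ⊥) ⊃ (ψ > φ) if and only if F satisfies WLA, i.e., for all P, Q ⊆ W and w ∈ W, f(P,w) = ∅ implies P ∩ f(Q,w) = ∅. -/
/-!
The antecedent `¬φ > ⊥` holds at `w` exactly when `f([¬φ], w) = ∅`, and `ψ > φ` holds at `w`
exactly when `[¬φ] ∩ f([ψ], w) = ∅`, so an instance of MOD at `w` is WLA at `w` for the
propositions `P = [¬φ]` and `Q = [ψ]`. Conversely, arbitrary `P` and `Q` arise in this way, since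
two distinct sentence letters (zero-place predicates) may be interpreted as `Pᶜ` and `Q`.
-/

universe u

theorem not_sat_bot {F : SelFrame.{u}} (M : SelModel F) (w : F.W) (g : ℕ → F.D) :
    ¬ Sat M .bot w g :=
  fun h => h fun ht => ht

/-- Frame correspondence for MOD: a selection frame `F`
validates every instance of the MOD schema `(¬φ > ⊥) ⊃ (ψ > φ)` if and only
if `F` satisfies WLA. -/
theorem MOD_frame_correspondence (F : SelFrame.{u}) :
    (∀ φ ψ : Formula, FrameValid F (.imp (.cond (.neg φ) .bot) (.cond ψ φ))) ↔
      F.WLA := by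
  constructor
  · intro h P Q w hP
    -- `φ` and `ψ` are sentence letters true exactly on `Pᶜ` and on `Q`.
    let M : SelModel F :=
      ⟨fun _ p v => if p = 0 then {_t | v ∉ P} else {_t | v ∈ Q}⟩
    obtain ⟨a⟩ := F.Dne
    have key := h (.atom 0 0 Fin.elim0) (.atom 0 1 Fin.elim0) M w fun _ => a
    simp only [Sat, M, if_true, one_ne_zero, if_false, Set.mem_ofPred_eq, not_not,
      Set.ofPred_mem_eq, hP, Set.empty_subset, forall_const] at key
    ext v
    simp only [Set.mem_inter_iff, Set.mem_empty_iff_false, iff_false, not_and]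
    exact fun hv hvQ => key hvQ hv
  · intro h φ ψ M w g hbox v hv
    have hempty : F.f {u | Sat M φ.neg u g} w = ∅ :=
      Set.eq_empty_of_forall_notMem fun u hu => not_sat_bot M u g (hbox hu)
    by_contra hn
    have hmem : v ∈ {u | Sat M φ.neg u g} ∩ F.f {u | Sat M ψ u g} w := ⟨hn, hv⟩
    rw [h _ _ w hempty] at hmem
    exact hmem
end

section
/- Every selection frame satisfying Uniformity and Uniqueness satisfies WLA: if for all P,Q ⊆ W and w ∈ W we have (Uniformity) f(P,w) ⊆ Q and f(Q,w) ⊆ P imply f(P,w) = f(Q,w), and (Uniqueness) f(P,w) has at most one element, then for all P, Q ⊆ W and w ∈ W, f(P,w) = ∅ implies P ∩ f(Q,w) = ∅. -/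
universe u

/-- Every selection frame satisfying Uniformity and Uniqueness
satisfies WLA. -/
theorem uniformity_uniqueness_imp_WLA (F : SelFrame.{u})
    (hUnif : F.Uniformity) (hUniq : F.Uniqueness) : F.WLA := by
  intro P Q w hP
  by_contra hne
  obtain ⟨v, hvP, hvQ⟩ := Set.nonempty_iff_ne_empty.mpr hne
  -- By Uniqueness `f(Q,w) = {v} ⊆ P`, while `f(P,w) = ∅ ⊆ Q`, so Uniformity gives `f(Q,w) = ∅`.
  have hQP : F.f Q w ⊆ P := fun u hu => hUniq Q w hu hvQ ▸ hvP
  have hPQ : F.f P w ⊆ Q := hP ▸ Set.empty_subset Q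
  rw [← hUnif P Q w hPQ hQP, hP] at hvQ
  exact hvQ
end
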